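/- For any q ≥ 1 and any connected colored marked graph 𝒢 with exactly one edge ℓ (black with σ_ℓ = 1 or red with σ_ℓ = −1), rooted so that its vertices are 0 and ℓ, the characteristic polynomial χ_𝒢(t) = t² − ℓ̄(ξ) t − σ_ℓ c(ℓ)² is irreducible over ℚ(ξ₁,...,ξ_m) (equivalently, it does not factor into linear factors with coefficients in ℤ[ξ]). -/

import Mathlib

open Finset MvPolynomial Polynomial

/-- `A_r(ξ) = Σ_{β ∈ ℕ^m, |β|₁ = r} multinomial(r,β)² ξ^β` over `ℚ`. -/
noncomputable def Apoly (m r : ℕ) : MvPolynomial (Fin m) ℚ :=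
  ∑ β ∈ (Fintype.piFinset fun _ : Fin m => Finset.range (r + 1)).filter
      (fun β => ∑ i, β i = r),
    MvPolynomial.C ((Nat.multinomial Finset.univ β : ℚ) ^ 2) *
      ∏ i, MvPolynomial.X i ^ β i

/-!
If `χ = (t - r)(t - s)`, then `r + s = ℓ̄` and `r s = -σ_ℓ c(ℓ)² = κ ξ^|n| T²`, where `κ` is a
constant and `T`, of degree `d < q`, is the sum in `c(ℓ)`. Replacing `n` by `-n` for a red edge
brings both colours to the same form. Either `ξ^|n|` divides one of the two factors, or `ξᵢ ∣ r` and
`ξⱼ ∣ s` for some `i`, `j` in the support of `n`.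

In the first case let the variables in the support of `n` vanish. This kills one factor, while `ℓ̄`
becomes a multiple of `A_q` and `T` a nonzero multiple of `A_d`, so that `A_q` divides `A_d²`. This
fails at the origin if `d = 0`. If `d > 0`, then at least two variables remain; with two of them set
to `X` and `1` and the others to `0`, `A_q` becomes `∑ⱼ C(q,j)² X^j`. It is squarefree because it
solves a hypergeometric equation, so, being of degree `q > d`, it cannot divide the image of `A_d²`.

In the second case `ℓ̄` vanishes at every coordinate vector other than `eᵢ` and `eⱼ`. The values of
`ℓ̄` there force the support to be `{i, j}`, and `q = 1`, `n = eᵢ + eⱼ` if `ℓ` is red. Comparing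
`∂ᵢℓ̄ · ∂ⱼℓ̄` with the coefficient of `ξᵢ ξⱼ` in `r s` then gives an equation between constants that
fails.
-/

section Squarefree

variable {K : Type*} [Field K] [CharZero K]

theorem pow_succ_dvd_of_pow_dvd_derivative {π f : K[X]} (hπ : Irreducible π) {k : ℕ} (hk : k ≠ 0)
    (hf : π ^ k ∣ f) (hf' : π ^ k ∣ derivative f) : π ^ (k + 1) ∣ f := by
  obtain ⟨j, rfl⟩ : ∃ j, k = j + 1 := Nat.exists_eq_succ_of_ne_zero hk
  obtain ⟨g, rfl⟩ := hf
  have hj : IsUnit (Polynomial.C ((j : K) + 1)) :=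
    Polynomial.isUnit_C.2 (Nat.cast_add_one_ne_zero j).isUnit
  have hdvd : π ^ j * π ∣ π ^ j * (Polynomial.C ((j : K) + 1) * (derivative π * g)) := by
    rw [← pow_succ, ← dvd_add_left (dvd_mul_right _ (derivative g))]
    convert hf' using 1
    rw [derivative_mul, derivative_pow_succ]
    ring
  have hg : π ∣ derivative π * g :=
    hj.dvd_mul_left.1 ((mul_dvd_mul_iff_left (pow_ne_zero j hπ.ne_zero)).1 hdvd)
  have hπ' : ¬ π ∣ derivative π := fun h =>
    hπ.natDegree_pos.ne' (Polynomial.derivative_eq_zero.1 (dvd_derivative_iff.1 h))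
  rw [pow_succ π (j + 1)]
  exact mul_dvd_mul_left _ ((hπ.prime.dvd_or_dvd hg).resolve_left hπ')

/- Every power of a multiple factor `π` of `f` would divide both `f` and `f'`: the equation passes
`π ^ k` on to `f''`, and `π ^ k ∣ g, g'` forces `π ^ (k + 1) ∣ g`. -/
theorem squarefree_of_mul_derivative_derivative_eq {a b c f : K[X]} (hf : f ≠ 0)
    (haf : IsCoprime a f)
    (hode : a * derivative (derivative f) = b * f + c * derivative f) : Squarefree f := by
  rw [squarefree_iff_irreducible_sq_not_dvd_of_ne_zero hf]
  intro π hπ hsq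
  have hπf : π ∣ f := dvd_of_mul_left_dvd hsq
  have hπf' : π ∣ derivative f := by
    obtain ⟨g, rfl⟩ := hsq
    exact ⟨2 * derivative π * g + π * derivative g, by simp only [derivative_mul]; ring⟩
  have hπa : IsCoprime π a := (haf.of_isCoprime_of_dvd_right hπf).symm
  have hpow : ∀ k, π ^ (k + 1) ∣ f ∧ π ^ (k + 1) ∣ derivative f := by
    intro k
    induction k with
    | zero => simpa only [zero_add, pow_one] using And.intro hπf hπf'
    | succ k ih =>
      have haf'' : π ^ (k + 1) ∣ a * derivative (derivative f) := by
        rw [hode]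
        exact dvd_add (ih.1.mul_left b) (ih.2.mul_left c)
      have hf'' : π ^ (k + 1) ∣ derivative (derivative f) :=
        hπa.pow_left.dvd_of_dvd_mul_left haf''
      exact ⟨pow_succ_dvd_of_pow_dvd_derivative hπ k.succ_ne_zero ih.1 ih.2,
        pow_succ_dvd_of_pow_dvd_derivative hπ k.succ_ne_zero ih.2 hf''⟩
  obtain ⟨n, hn⟩ := FiniteMultiplicity.of_not_isUnit hπ.not_isUnit hf
  exact hn (hpow n).1

end Squarefree

section ChooseSq

/-- The polynomial `∑ⱼ C(d,j)² X^j`, which is `A_d` in two variables with one of them set to `1`. -/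
noncomputable def chooseSqPoly (d : ℕ) : ℚ[X] :=
  ∑ j ∈ range (d + 1), Polynomial.C ((d.choose j : ℚ) ^ 2) * Polynomial.X ^ j

theorem coeff_chooseSqPoly (d j : ℕ) : (chooseSqPoly d).coeff j = (d.choose j : ℚ) ^ 2 := by
  simp only [chooseSqPoly, Polynomial.finsetSum_coeff, Polynomial.coeff_C_mul_X_pow,
    Finset.sum_ite_eq, mem_range]
  split_ifs with h
  · rfl
  · rw [Nat.choose_eq_zero_of_lt (by omega), Nat.cast_zero, zero_pow two_ne_zero]

theorem natDegree_chooseSqPoly (d : ℕ) : (chooseSqPoly d).natDegree = d := by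
  refine natDegree_eq_of_le_of_coeff_ne_zero (natDegree_le_iff_coeff_eq_zero.2 fun j hj => ?_) ?_
  · rw [coeff_chooseSqPoly, Nat.choose_eq_zero_of_lt hj, Nat.cast_zero, zero_pow two_ne_zero]
  · simp [coeff_chooseSqPoly]

theorem chooseSqPoly_ne_zero (d : ℕ) : chooseSqPoly d ≠ 0 := fun h => by
  simpa [h] using coeff_chooseSqPoly d 0

theorem eval_one_chooseSqPoly_pos (d : ℕ) : 0 < (chooseSqPoly d).eval 1 := by
  simp only [chooseSqPoly, Polynomial.eval_finsetSum, Polynomial.eval_mul, Polynomial.eval_C,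
    Polynomial.eval_pow, Polynomial.eval_X, one_pow, mul_one]
  exact Finset.sum_pos' (fun j _ => sq_nonneg _) ⟨0, by simp, by simp⟩

-- This is the hypergeometric equation, since `chooseSqPoly d = ₂F₁(-d, -d; 1; X)`.
theorem chooseSqPoly_ode (d : ℕ) :
    Polynomial.X * (Polynomial.X - 1) * derivative (derivative (chooseSqPoly d)) =
      Polynomial.C (-(d : ℚ) ^ 2) * chooseSqPoly d +
        (1 + Polynomial.C (2 * (d : ℚ) - 1) * Polynomial.X) * derivative (chooseSqPoly d) := by
  have hrec (j : ℕ) : ((j : ℚ) + 1) * d.choose (j + 1) = (d - j) * d.choose j := by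
    rcases le_or_gt j d with h | h
    · have := congrArg (Nat.cast (R := ℚ)) (Nat.choose_succ_right_eq d j)
      push_cast [h] at this
      linear_combination this
    · simp [Nat.choose_eq_zero_of_lt h, Nat.choose_eq_zero_of_lt (h.trans j.lt_succ_self)]
  suffices Polynomial.X * (Polynomial.X * derivative (derivative (chooseSqPoly d))) -
      Polynomial.X * derivative (derivative (chooseSqPoly d)) =
      Polynomial.C (-(d : ℚ) ^ 2) * chooseSqPoly d + derivative (chooseSqPoly d) +
        Polynomial.C (2 * (d : ℚ) - 1) * (Polynomial.X * derivative (chooseSqPoly d)) by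
    linear_combination this
  ext j
  simp only [Polynomial.coeff_sub, Polynomial.coeff_add, Polynomial.coeff_C_mul]
  rcases j with _ | _ | j
  · simp [Polynomial.coeff_derivative, coeff_chooseSqPoly]
  · have := hrec 1
    simp only [Nat.cast_one, Nat.reduceAdd, Nat.choose_one_right, zero_add,
      Polynomial.coeff_X_mul, Polynomial.mul_coeff_zero, Polynomial.coeff_X_zero,
      Polynomial.coeff_derivative, coeff_chooseSqPoly, Nat.cast_zero, mul_one, zero_mul, zero_sub,
      neg_mul] at this ⊢
    linear_combination -(2 * (d.choose 2 : ℚ) + (d - 1) * d) * this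
  · have := hrec (j + 2)
    simp only [Polynomial.coeff_X_mul, Polynomial.coeff_derivative, coeff_chooseSqPoly] at this ⊢
    push_cast at this ⊢
    linear_combination -(((j : ℚ) + 3) * d.choose (j + 3) + (d - (j + 2)) * d.choose (j + 2)) * this

theorem squarefree_chooseSqPoly (d : ℕ) : Squarefree (chooseSqPoly d) := by
  refine squarefree_of_mul_derivative_derivative_eq (chooseSqPoly_ne_zero d) ?_ (chooseSqPoly_ode d)
  rw [← Polynomial.C_1]
  refine IsCoprime.mul_left ?_ ?_
  · rw [Polynomial.irreducible_X.coprime_iff_not_dvd, Polynomial.X_dvd_iff, coeff_chooseSqPoly]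
    simp
  · rw [(Polynomial.irreducible_X_sub_C 1).coprime_iff_not_dvd, dvd_iff_isRoot]
    exact (eval_one_chooseSqPoly_pos d).ne'

theorem not_chooseSqPoly_dvd_sq {d q : ℕ} (hdq : d < q) :
    ¬ chooseSqPoly q ∣ chooseSqPoly d ^ 2 := by
  rw [(squarefree_chooseSqPoly q).dvd_pow_iff_dvd two_ne_zero]
  intro h
  have := natDegree_le_of_dvd h (chooseSqPoly_ne_zero d)
  simp only [natDegree_chooseSqPoly] at this
  omega

end ChooseSq

section Multinomial

variable {ι : Type*} {s : Finset ι}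

theorem multinomial_add_of_disjoint {a b : ι → ℕ} (hab : ∀ i ∈ s, a i = 0 ∨ b i = 0) :
    Nat.multinomial s (a + b) = (∑ i ∈ s, a i + ∑ i ∈ s, b i).choose (∑ i ∈ s, a i) *
      Nat.multinomial s a * Nat.multinomial s b := by
  have hfact : ∏ i ∈ s, ((a + b) i).factorial =
      (∏ i ∈ s, (a i).factorial) * ∏ i ∈ s, (b i).factorial := by
    rw [← Finset.prod_mul_distrib]
    refine Finset.prod_congr rfl fun i hi => ?_
    rcases hab i hi with h | h <;> simp [h]
  refine Nat.eq_of_mul_eq_mul_left (Nat.prod_factorial_pos s (a + b)) ?_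
  rw [Nat.multinomial_spec, hfact, Finset.sum_congr rfl fun i _ => Pi.add_apply a b i,
    Finset.sum_add_distrib, ← Nat.add_choose_mul_factorial_mul_factorial,
    ← Nat.multinomial_spec s a, ← Nat.multinomial_spec s b, Nat.choose_symm_add]
  ring

theorem multinomial_add_single [DecidableEq ι] (a : ι → ℕ) {k : ι} (hk : k ∈ s) :
    Nat.multinomial s (a + Pi.single k 1) * (a k + 1) =
      (∑ i ∈ s, a i + 1) * Nat.multinomial s a := by
  have hfact : ∏ i ∈ s, ((a + Pi.single k 1 : ι → ℕ) i).factorial =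
      (a k + 1) * ∏ i ∈ s, (a i).factorial := by
    rw [← Finset.mul_prod_erase s _ hk, ← Finset.mul_prod_erase s _ hk, ← mul_assoc]
    congr 1
    · rw [Pi.add_apply, Pi.single_eq_same, Nat.factorial_succ]
    · refine Finset.prod_congr rfl fun i hi => ?_
      rw [Pi.add_apply, Pi.single_eq_of_ne (Finset.ne_of_mem_erase hi), add_zero]
  have hsum : ∑ i ∈ s, (a + Pi.single k 1 : ι → ℕ) i = ∑ i ∈ s, a i + 1 := by
    simp [Finset.sum_add_distrib, hk]
  have hspec := Nat.multinomial_spec s (a + Pi.single k 1)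
  rw [hfact, hsum, Nat.factorial_succ, ← Nat.multinomial_spec s a] at hspec
  refine Nat.eq_of_mul_eq_mul_left (Nat.prod_factorial_pos s a) ?_
  linear_combination hspec

end Multinomial

section Evaluation

variable {σ : Type*}

theorem coeff_sum_C_mul_prod_X_pow {R : Type*} [CommSemiring R] [Fintype σ] [DecidableEq (σ → ℕ)]
    (s : Finset (σ → ℕ)) (w : (σ → ℕ) → R) (e : σ →₀ ℕ) :
    MvPolynomial.coeff e (∑ α ∈ s, MvPolynomial.C (w α) * ∏ i, MvPolynomial.X i ^ α i) =
      if ⇑e ∈ s then w e else 0 := by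
  have hterm (α : σ → ℕ) :
      MvPolynomial.coeff e (MvPolynomial.C (w α) * ∏ i, MvPolynomial.X i ^ α i) =
        if α = e then w α else 0 := by
    classical
    have := MvPolynomial.monomial_eq (s := Finsupp.equivFunOnFinite.symm α) (a := w α)
    rw [Finsupp.prod_fintype _ _ fun _ => pow_zero _] at this
    simp only [Finsupp.coe_equivFunOnFinite_symm] at this
    simp only [← this, MvPolynomial.coeff_monomial, ← DFunLike.coe_fn_eq,
      Finsupp.coe_equivFunOnFinite_symm]
  simp only [MvPolynomial.coeff_sum, hterm, Finset.sum_ite_eq']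

theorem aeval_congr_of_coeff {R A : Type*} [CommRing R] [CommRing A] [Algebra R A] {v : σ → A}
    {p q : MvPolynomial σ R}
    (h : ∀ α : σ →₀ ℕ, (∀ i, v i = 0 → α i = 0) →
      MvPolynomial.coeff α p = MvPolynomial.coeff α q) :
    MvPolynomial.aeval v p = MvPolynomial.aeval v q := by
  rw [← sub_eq_zero, ← map_sub, MvPolynomial.aeval_def, MvPolynomial.eval₂_eq]
  refine Finset.sum_eq_zero fun α _ => ?_
  by_cases hα : ∀ i, v i = 0 → α i = 0
  · rw [MvPolynomial.coeff_sub, h α hα, sub_self, map_zero, zero_mul]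
  · push Not at hα
    obtain ⟨i, hvi, hαi⟩ := hα
    rw [Finset.prod_eq_zero (Finsupp.mem_support_iff.2 hαi) (by rw [hvi, zero_pow hαi]), mul_zero]

theorem aeval_eq_zero_of_X_dvd {R A : Type*} [CommSemiring R] [CommSemiring A] [Algebra R A]
    {v : σ → A} {i : σ} (hi : v i = 0) {p : MvPolynomial σ R} (hp : MvPolynomial.X i ∣ p) :
    MvPolynomial.aeval v p = 0 := by
  obtain ⟨g, rfl⟩ := hp
  rw [map_mul, MvPolynomial.aeval_X, hi, zero_mul]

/- Where `Xᵢ` and `Xⱼ` vanish, the `i`-th derivative of `r + s` is `r / Xᵢ` and the `j`-th one is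
`s / Xⱼ`. -/
theorem aeval_pderiv_mul_aeval_pderiv {R A : Type*} [CommRing R] [IsDomain R] [CommRing A]
    [Algebra R A] {i j : σ} (hij : i ≠ j) {r s g : MvPolynomial σ R}
    (hr : MvPolynomial.X i ∣ r) (hs : MvPolynomial.X j ∣ s)
    (hrs : r * s = MvPolynomial.X i * MvPolynomial.X j * g) {v : σ → A} (hi : v i = 0)
    (hj : v j = 0) :
    MvPolynomial.aeval v (MvPolynomial.pderiv i (r + s)) *
      MvPolynomial.aeval v (MvPolynomial.pderiv j (r + s)) = MvPolynomial.aeval v g := by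
  obtain ⟨r, rfl⟩ := hr
  obtain ⟨s, rfl⟩ := hs
  have hg : r * s = g := mul_left_cancel₀
    (mul_ne_zero (MvPolynomial.X_ne_zero (R := R) i) (MvPolynomial.X_ne_zero j))
    (by linear_combination hrs)
  simp [Derivation.leibniz, MvPolynomial.pderiv_X_of_ne hij, MvPolynomial.pderiv_X_of_ne hij.symm,
    hi, hj, ← hg]

end Evaluation

theorem exists_prime_dvd_dvd_or_prod_pow_dvd_or {ι M : Type*} [CommMonoidWithZero M]
    [IsCancelMulZero M] [DecompositionMonoid M] {s : Finset ι} {p : ι → M}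
    (hp : ∀ i ∈ s, Prime (p i)) {e : ι → ℕ} {a b c : M}
    (h : a * b = (∏ i ∈ s, p i ^ e i) * c) :
    (∃ i ∈ s, ∃ j ∈ s, e i ≠ 0 ∧ e j ≠ 0 ∧ p i ∣ a ∧ p j ∣ b) ∨
      ∏ i ∈ s, p i ^ e i ∣ a ∨ ∏ i ∈ s, p i ^ e i ∣ b := by
  have hrel {u : M} (hu : ∀ i ∈ s, e i ≠ 0 → ¬ p i ∣ u) : IsRelPrime (∏ i ∈ s, p i ^ e i) u := by
    refine IsRelPrime.prod_left fun i hi => ?_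
    rcases eq_or_ne (e i) 0 with hei | hei
    · rw [hei, pow_zero]
      exact isRelPrime_one_left
    · exact ((hp i hi).irreducible.isRelPrime_iff_not_dvd.2 (hu i hi hei)).pow_left
  have hdvd : ∏ i ∈ s, p i ^ e i ∣ a * b := h ▸ dvd_mul_right _ _
  by_cases ha : ∀ i ∈ s, e i ≠ 0 → ¬ p i ∣ a
  · exact .inr (.inr ((hrel ha).dvd_of_dvd_mul_left hdvd))
  by_cases hb : ∀ i ∈ s, e i ≠ 0 → ¬ p i ∣ b
  · exact .inr (.inl ((hrel hb).dvd_of_dvd_mul_right hdvd))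
  push Not at ha hb
  obtain ⟨i, hi, hei, hpi⟩ := ha
  obtain ⟨j, hj, hej, hpj⟩ := hb
  exact .inl ⟨i, hi, j, hj, hei, hej, hpi, hpj⟩

section Apoly

variable {m : ℕ}

theorem filter_piFinset_range_eq_piAntidiag {N d t : ℕ} (hd : d ≤ N) (l : Fin m → ℕ)
    (ht : ∑ i, l i + d = t) :
    ((Fintype.piFinset fun _ : Fin m => range (N + 1)).filter fun α => ∑ i, (α i + l i) = t) =
      piAntidiag univ d := by
  ext α
  simp only [mem_filter, Fintype.mem_piFinset, mem_range, mem_piAntidiag, Finset.sum_add_distrib,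
    Finset.mem_univ, implies_true, and_true]
  change _ ↔ ∑ i, α i = d
  refine ⟨fun h => by omega, fun h => ⟨fun i => ?_, by omega⟩⟩
  have : α i ≤ ∑ j, α j := Finset.single_le_sum (fun _ _ => Nat.zero_le _) (Finset.mem_univ i)
  omega

theorem coeff_Apoly (r : ℕ) (e : Fin m →₀ ℕ) :
    MvPolynomial.coeff e (Apoly m r) =
      if ∑ i, e i = r then (Nat.multinomial univ e : ℚ) ^ 2 else 0 := by
  have hset := filter_piFinset_range_eq_piAntidiag (m := m) le_rfl 0 (d := r) (t := r) (by simp)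
  simp only [Pi.zero_apply, add_zero] at hset
  rw [Apoly, hset, coeff_sum_C_mul_prod_X_pow]
  simp

theorem Apoly_zero : Apoly m 0 = 1 := by
  ext e
  have hsum : ∑ i, e i = 0 ↔ 0 = e := by
    rw [Finset.sum_eq_zero_iff, eq_comm, Finsupp.ext_iff]
    simp
  rw [coeff_Apoly, MvPolynomial.coeff_one, if_congr hsum rfl rfl]
  split_ifs with he
  · simp [← he, Nat.multinomial]
  · rfl

theorem coeff_add_single_Apoly_succ (q : ℕ) (k : Fin m) (e : Fin m →₀ ℕ) :
    MvPolynomial.coeff (e + Finsupp.single k 1) (Apoly m (q + 1)) =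
      (((q : ℚ) + 1) / (e k + 1)) ^ 2 * MvPolynomial.coeff e (Apoly m q) := by
  have hsum : ∑ i, (e + Finsupp.single k 1 : Fin m →₀ ℕ) i = ∑ i, e i + 1 := by
    simp [Finset.sum_add_distrib, Finsupp.single_apply]
  rw [coeff_Apoly, coeff_Apoly, hsum]
  simp only [add_left_inj]
  split_ifs with he
  · have hrec := multinomial_add_single (⇑e) (Finset.mem_univ k)
    rw [he, ← Finsupp.single_eq_pi_single, ← Finsupp.coe_add] at hrec
    have hrec' : (Nat.multinomial univ (e + Finsupp.single k 1 : Fin m →₀ ℕ) : ℚ) =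
        (q + 1) / (e k + 1) * Nat.multinomial univ e := by
      rw [div_mul_eq_mul_div, eq_div_iff (Nat.cast_add_one_ne_zero _)]
      exact_mod_cast hrec
    rw [hrec', mul_pow]
  · rw [mul_zero]

theorem aeval_zero_Apoly {q : ℕ} (hq : q ≠ 0) :
    MvPolynomial.aeval (0 : Fin m → ℚ) (Apoly m q) = 0 := by
  rw [MvPolynomial.aeval_zero, MvPolynomial.constantCoeff_eq, coeff_Apoly, if_neg, map_zero]
  simpa using hq.symm

theorem aeval_single_one_Apoly (q : ℕ) (k : Fin m) :
    MvPolynomial.aeval (Pi.single k 1 : Fin m → ℚ) (Apoly m q) = 1 := by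
  have hcongr : MvPolynomial.aeval (Pi.single k 1 : Fin m → ℚ) (Apoly m q) =
      MvPolynomial.aeval (Pi.single k 1 : Fin m → ℚ)
        (MvPolynomial.X k ^ q : MvPolynomial (Fin m) ℚ) := by
    refine aeval_congr_of_coeff fun α hα => ?_
    obtain ⟨a, rfl⟩ : ∃ a, α = Finsupp.single k a := by
      refine ⟨α k, Finsupp.ext fun i => ?_⟩
      rcases eq_or_ne i k with rfl | hik
      · rw [Finsupp.single_eq_same]
      · rw [Finsupp.single_eq_of_ne hik, hα i (Pi.single_eq_of_ne hik _)]
    rw [coeff_Apoly, MvPolynomial.coeff_X_pow]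
    simp [Finsupp.single_eq_pi_single, Nat.multinomial_single, (Finsupp.single_injective k).eq_iff,
      eq_comm]
  simp [hcongr]

theorem coeff_single_add_single_Apoly (q : ℕ) {z y : Fin m} (hzy : z ≠ y) (a b : ℕ) :
    MvPolynomial.coeff (Finsupp.single z a + Finsupp.single y b) (Apoly m q) =
      if a + b = q then ((a + b).choose a : ℚ) ^ 2 else 0 := by
  have hdisj (i : Fin m) (_ : i ∈ univ) :
      (Pi.single z a : Fin m → ℕ) i = 0 ∨ (Pi.single y b : Fin m → ℕ) i = 0 := by
    rcases eq_or_ne i z with rfl | hiz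
    · exact .inr (by simp [hzy])
    · exact .inl (by simp [hiz])
  rw [coeff_Apoly, Finsupp.coe_add, Finsupp.single_eq_pi_single, Finsupp.single_eq_pi_single,
    multinomial_add_of_disjoint hdisj, Nat.multinomial_single, Nat.multinomial_single]
  simp [Finset.sum_add_distrib]

theorem aeval_single_X_add_single_one_Apoly (q : ℕ) {z y : Fin m} (hzy : z ≠ y) :
    MvPolynomial.aeval (Pi.single z Polynomial.X + Pi.single y 1 : Fin m → ℚ[X]) (Apoly m q) =
      chooseSqPoly q := by
  set v : Fin m → ℚ[X] := Pi.single z Polynomial.X + Pi.single y 1 with hv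
  have hvz : v z = Polynomial.X := by simp [hv, hzy]
  have hvy : v y = 1 := by simp [hv, hzy.symm]
  have hcongr : MvPolynomial.aeval v (Apoly m q) = MvPolynomial.aeval v (∑ j ∈ range (q + 1),
      MvPolynomial.C ((q.choose j : ℚ) ^ 2) *
        (MvPolynomial.X z ^ j * MvPolynomial.X y ^ (q - j))) := by
    refine aeval_congr_of_coeff fun α hα => ?_
    obtain ⟨a, b, rfl⟩ : ∃ a b, α = Finsupp.single z a + Finsupp.single y b := by
      refine ⟨α z, α y, Finsupp.ext fun i => ?_⟩
      rcases eq_or_ne i z with rfl | hiz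
      · simp [hzy]
      rcases eq_or_ne i y with rfl | hiy
      · simp [hzy.symm]
      · simp [hiz, hiy, hα i (by simp [hv, hiz, hiy])]
    have hmon (j : ℕ) : Finsupp.single z j + Finsupp.single y (q - j) =
        Finsupp.single z a + Finsupp.single y b ↔ j = a ∧ q - j = b := by
      refine ⟨fun h => ?_, fun h => by rw [← h.1, ← h.2]⟩
      have hz := DFunLike.congr_fun h z
      have hy := DFunLike.congr_fun h y
      simpa [hzy, hzy.symm] using And.intro hz hy
    rw [coeff_single_add_single_Apoly q hzy]
    simp only [MvPolynomial.X_pow_eq_monomial, MvPolynomial.monomial_mul, MvPolynomial.coeff_sum,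
      MvPolynomial.coeff_C_mul, MvPolynomial.coeff_monomial, hmon, mul_one, mul_ite, mul_zero,
      ite_and, Finset.sum_ite_eq', mem_range]
    split_ifs <;> first | omega | simp_all
  simp [hcongr, hvz, hvy, chooseSqPoly]

end Apoly
section EdgeForm

variable {m : ℕ} {A : Type*} [CommRing A] [Algebra ℚ A]

/-- The linear coefficient `ℓ̄` in a form common to both colours: it is `edgeForm q n` for a black
edge `n` and `edgeForm q (-n)` for a red one. -/
noncomputable def edgeForm (q : ℕ) (n : Fin m → ℤ) : MvPolynomial (Fin m) ℚ :=
  ((q : ℚ) + 1)⁻¹ • ∑ i, n i • MvPolynomial.pderiv i (Apoly m (q + 1)) +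
    ((q + 1) * ∑ i, (n i : ℚ)) • Apoly m q

theorem coeff_edgeForm (q : ℕ) (n : Fin m → ℤ) (e : Fin m →₀ ℕ) :
    MvPolynomial.coeff e (edgeForm q n) =
      (q + 1) * (2 * ∑ i, (n i : ℚ) - ∑ i, (n i : ℚ) * (e i / (e i + 1))) *
        MvPolynomial.coeff e (Apoly m q) := by
  have hterm (i : Fin m) :
      MvPolynomial.coeff e (n i • MvPolynomial.pderiv i (Apoly m (q + 1))) =
        ((n i : ℚ) - n i * (e i / (e i + 1))) *
          ((q + 1) ^ 2 * MvPolynomial.coeff e (Apoly m q)) := by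
    rw [MvPolynomial.coeff_smul, MvPolynomial.coeff_pderiv, coeff_add_single_Apoly_succ,
      zsmul_eq_mul]
    have : (e i : ℚ) + 1 ≠ 0 := Nat.cast_add_one_ne_zero _
    field_simp
    ring
  have hq : (q : ℚ) + 1 ≠ 0 := Nat.cast_add_one_ne_zero _
  rw [edgeForm, MvPolynomial.coeff_add, MvPolynomial.coeff_smul, MvPolynomial.coeff_smul,
    MvPolynomial.coeff_sum, Finset.sum_congr rfl fun i _ => hterm i, ← Finset.sum_mul]
  simp only [Finset.sum_sub_distrib, smul_eq_mul]
  field_simp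
  ring

theorem aeval_edgeForm_of_support (q : ℕ) {n : Fin m → ℤ} {v : Fin m → A}
    (hv : ∀ i, n i ≠ 0 → v i = 0) :
    MvPolynomial.aeval v (edgeForm q n) =
      (2 * (q + 1) * ∑ i, (n i : ℚ)) • MvPolynomial.aeval v (Apoly m q) := by
  rw [← map_smul]
  refine aeval_congr_of_coeff fun α hα => ?_
  have hsum : ∑ i, (n i : ℚ) * (α i / (α i + 1)) = 0 := by
    refine Finset.sum_eq_zero fun i _ => ?_
    rcases eq_or_ne (n i) 0 with hi | hi
    · rw [hi, Int.cast_zero, zero_mul]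
    · rw [hα i (hv i hi), Nat.cast_zero, zero_div, mul_zero]
  rw [coeff_edgeForm, hsum, MvPolynomial.coeff_smul, smul_eq_mul]
  ring

theorem aeval_single_one_edgeForm (q : ℕ) (n : Fin m → ℤ) (k : Fin m) :
    MvPolynomial.aeval (Pi.single k 1 : Fin m → ℚ) (edgeForm q n) =
      2 * (q + 1) * ∑ i, (n i : ℚ) - q * n k := by
  have hcongr : MvPolynomial.aeval (Pi.single k 1 : Fin m → ℚ) (edgeForm q n) =
      MvPolynomial.aeval (Pi.single k 1 : Fin m → ℚ)
        ((2 * (q + 1) * ∑ i, (n i : ℚ) - q * n k) • Apoly m q) := by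
    refine aeval_congr_of_coeff fun α hα => ?_
    have hαk {i : Fin m} (hi : i ≠ k) : α i = 0 := hα i (Pi.single_eq_of_ne hi _)
    have hsum : ∑ i, (n i : ℚ) * (α i / (α i + 1)) = n k * (α k / (α k + 1)) :=
      Fintype.sum_eq_single k fun i hi => by rw [hαk hi, Nat.cast_zero, zero_div, mul_zero]
    have hdeg : ∑ i, α i = α k := Fintype.sum_eq_single k fun i hi => hαk hi
    rw [coeff_edgeForm, hsum, MvPolynomial.coeff_smul, smul_eq_mul, coeff_Apoly, hdeg]
    split_ifs with hq
    · rw [hq]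
      have : (q : ℚ) + 1 ≠ 0 := Nat.cast_add_one_ne_zero q
      field_simp
    · rw [mul_zero, mul_zero]
  rw [hcongr, map_smul, aeval_single_one_Apoly, smul_eq_mul, mul_one]

theorem aeval_pderiv_edgeForm_succ (q : ℕ) {n : Fin m → ℤ} {i : Fin m} {v : Fin m → A}
    (hi : v i = 0) (hv : ∀ k, n k ≠ 0 → v k = 0) :
    MvPolynomial.aeval v (MvPolynomial.pderiv i (edgeForm (q + 1) n)) =
      ((q + 2) * (q + 1) ^ 2 * (2 * ∑ k, (n k : ℚ) - n i / 2)) •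
        MvPolynomial.aeval v (Apoly m q) := by
  rw [← map_smul]
  refine aeval_congr_of_coeff fun α hα => ?_
  have hsum : ∑ k, (n k : ℚ) * ((α + Finsupp.single i 1 : Fin m →₀ ℕ) k /
      ((α + Finsupp.single i 1 : Fin m →₀ ℕ) k + 1)) = n i / 2 := by
    rw [Fintype.sum_eq_single i fun k hk => ?_]
    · rw [Finsupp.add_apply, Finsupp.single_eq_same, hα i hi, zero_add, Nat.cast_one,
        one_add_one_eq_two, mul_one_div]
    · rcases eq_or_ne (n k) 0 with hnk | hnk
      · rw [hnk, Int.cast_zero, zero_mul]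
      · simp [hα k (hv k hnk), hk]
  rw [MvPolynomial.coeff_pderiv, coeff_edgeForm, hsum, coeff_add_single_Apoly_succ, hα i hi,
    MvPolynomial.coeff_smul, smul_eq_mul]
  push_cast
  ring

end EdgeForm

section OverlapForm

variable {m : ℕ} {A : Type*} [CommRing A] [Algebra ℚ A]

/-- The sum over `α` in the formula for `c(ℓ)`, where `α` runs over the exponents of degree `d`. -/
noncomputable def overlapForm (d : ℕ) (n : Fin m → ℤ) : MvPolynomial (Fin m) ℚ :=
  ∑ α ∈ piAntidiag univ d,
    MvPolynomial.C ((Nat.multinomial univ (fun i => (n i).toNat + α i) : ℚ) *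
      (Nat.multinomial univ (fun i => (-n i).toNat + α i) : ℚ)) * ∏ i, MvPolynomial.X i ^ α i

/-- The ratio of `overlapForm d n` to `A_d` on the monomials that avoid the support of `n`. -/
def overlapRatio (d : ℕ) (n : Fin m → ℤ) : ℕ :=
  ((∑ i, (n i).toNat + d).choose d * Nat.multinomial univ fun i => (n i).toNat) *
    ((∑ i, (-n i).toNat + d).choose d * Nat.multinomial univ fun i => (-n i).toNat)

theorem overlapRatio_pos (d : ℕ) (n : Fin m → ℤ) : 0 < overlapRatio d n := by
  have := Nat.choose_pos (Nat.le_add_left d (∑ i, (n i).toNat))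
  have := Nat.choose_pos (Nat.le_add_left d (∑ i, (-n i).toNat))
  have := Nat.multinomial_pos univ fun i => (n i).toNat
  have := Nat.multinomial_pos univ fun i => (-n i).toNat
  unfold overlapRatio
  positivity

theorem aeval_overlapForm_of_support (d : ℕ) {n : Fin m → ℤ} {v : Fin m → A}
    (hv : ∀ i, n i ≠ 0 → v i = 0) :
    MvPolynomial.aeval v (overlapForm d n) =
      (overlapRatio d n : ℚ) • MvPolynomial.aeval v (Apoly m d) := by
  rw [← map_smul]
  refine aeval_congr_of_coeff fun α hα => ?_
  have hmult {l : Fin m → ℕ} (hl : ∀ i, n i = 0 → l i = 0) (hd : ∑ i, α i = d) :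
      Nat.multinomial univ (fun i => l i + α i) =
        (∑ i, l i + d).choose d * Nat.multinomial univ l * Nat.multinomial univ α := by
    have hdisj (i : Fin m) (_ : i ∈ univ) : l i = 0 ∨ α i = 0 := by
      rcases eq_or_ne (n i) 0 with hi | hi
      · exact .inl (hl i hi)
      · exact .inr (hα i (hv i hi))
    rw [← hd, ← Nat.choose_symm_add]
    exact multinomial_add_of_disjoint hdisj
  rw [overlapForm, coeff_sum_C_mul_prod_X_pow, MvPolynomial.coeff_smul, coeff_Apoly]
  simp only [mem_piAntidiag, Finset.mem_univ, implies_true, and_true]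
  split_ifs with hd
  · rw [hmult (l := fun i => (n i).toNat) (by grind) hd,
      hmult (l := fun i => (-n i).toNat) (by grind) hd, overlapRatio]
    push_cast
    rw [smul_eq_mul]
    ring
  · rw [smul_zero]

end OverlapForm
theorem card_le_card_filter_add_sum_natAbs {ι : Type*} [Fintype ι] (n : ι → ℤ) :
    Fintype.card ι ≤ #{i | n i = 0} + ∑ i, (n i).natAbs := by
  rw [← Finset.card_univ, ← Finset.card_filter_add_card_filter_not (s := univ) fun i => n i = 0,
    add_le_add_iff_left, Finset.card_eq_sum_ones, Finset.sum_filter]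
  exact Finset.sum_le_sum fun i _ => by split_ifs <;> omega

theorem sum_natAbs_pos {ι : Type*} [Fintype ι] {n : ι → ℤ} (hn : n ≠ 0) :
    0 < ∑ i, (n i).natAbs := by
  obtain ⟨i, hi⟩ := Function.ne_iff.1 hn
  exact Finset.sum_pos' (fun _ _ => Nat.zero_le _) ⟨i, mem_univ i, Int.natAbs_pos.2 hi⟩

section Factorization

variable {m q d : ℕ} {n : Fin m → ℤ} {κ : ℚ} {r s : MvPolynomial (Fin m) ℚ}

theorem aeval_Apoly_dvd_sq {A : Type*} [CommRing A] [Algebra ℚ A] (hn : n ≠ 0) (hκ : κ ≠ 0)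
    (hadd : r + s = edgeForm q n)
    (hmul : r * s = κ • ((∏ i, MvPolynomial.X i ^ (n i).natAbs) * overlapForm d n ^ 2))
    (hr : ∏ i, MvPolynomial.X i ^ (n i).natAbs ∣ r) {v : Fin m → A}
    (hv : ∀ i, n i ≠ 0 → v i = 0) :
    MvPolynomial.aeval v (Apoly m q) ∣ MvPolynomial.aeval v (Apoly m d) ^ 2 := by
  obtain ⟨i, hi⟩ := Function.ne_iff.1 hn
  have hXr : MvPolynomial.X i ∣ r :=
    (dvd_pow_self _ (Int.natAbs_ne_zero.2 hi)).trans <| (Finset.dvd_prod_of_mem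
      (fun j => MvPolynomial.X j ^ (n j).natAbs) (Finset.mem_univ i)).trans hr
  have hs : MvPolynomial.aeval v (Apoly m q) ∣ MvPolynomial.aeval v s := by
    have hadd' := congrArg (MvPolynomial.aeval v) hadd
    rw [map_add, aeval_eq_zero_of_X_dvd (hv i hi) hXr, zero_add,
      aeval_edgeForm_of_support q hv] at hadd'
    rw [hadd']
    exact dvd_smul_of_dvd _ dvd_rfl
  obtain ⟨r', rfl⟩ := hr
  have hmul' : r' * s = κ • overlapForm d n ^ 2 := by
    have hM : ∏ i, (MvPolynomial.X i : MvPolynomial (Fin m) ℚ) ^ (n i).natAbs ≠ 0 :=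
      Finset.prod_ne_zero_iff.2 fun j _ => pow_ne_zero _ (MvPolynomial.X_ne_zero j)
    refine mul_left_cancel₀ hM ?_
    rw [← mul_assoc, hmul, mul_smul_comm]
  have hsq := congrArg (MvPolynomial.aeval v) hmul'
  rw [map_mul, map_smul, map_pow, aeval_overlapForm_of_support d hv, _root_.smul_pow,
    smul_smul] at hsq
  have hK : κ * (overlapRatio d n : ℚ) ^ 2 ≠ 0 :=
    mul_ne_zero hκ (pow_ne_zero 2 (Nat.cast_ne_zero.2 (overlapRatio_pos d n).ne'))
  rw [← inv_smul_smul₀ hK (MvPolynomial.aeval v (Apoly m d) ^ 2), ← hsq]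
  exact dvd_smul_of_dvd _ (hs.mul_left _)

theorem not_prod_X_pow_dvd (hm : 2 * q ≤ m) (hn : n ≠ 0)
    (hdeg : ∑ i, (n i).natAbs + 2 * d = 2 * q) (hκ : κ ≠ 0) (hadd : r + s = edgeForm q n)
    (hmul : r * s = κ • ((∏ i, MvPolynomial.X i ^ (n i).natAbs) * overlapForm d n ^ 2)) :
    ¬ ∏ i, MvPolynomial.X i ^ (n i).natAbs ∣ r := by
  intro hr
  have hn_pos := sum_natAbs_pos hn
  have hdq : d < q := by omega
  rcases d.eq_zero_or_pos with rfl | hd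
  · have hdvd := aeval_Apoly_dvd_sq hn hκ hadd hmul hr (v := (0 : Fin m → ℚ)) fun _ _ => rfl
    rw [aeval_zero_Apoly hdq.ne', Apoly_zero, map_one, one_pow, zero_dvd_iff] at hdvd
    exact one_ne_zero hdvd
  · obtain ⟨z, hz, y, hy, hzy⟩ : ∃ z ∈ ({i | n i = 0} : Finset (Fin m)),
        ∃ y ∈ ({i | n i = 0} : Finset (Fin m)), z ≠ y := by
      have := card_le_card_filter_add_sum_natAbs n
      rw [Fintype.card_fin] at this
      exact Finset.one_lt_card.1 (by omega)
    rw [Finset.mem_filter_univ] at hz hy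
    have hdvd := aeval_Apoly_dvd_sq hn hκ hadd hmul hr
      (v := (Pi.single z Polynomial.X + Pi.single y 1 : Fin m → ℚ[X])) fun i hi => by
        have hiz : i ≠ z := fun h => hi (h ▸ hz)
        have hiy : i ≠ y := fun h => hi (h ▸ hy)
        simp [hiz, hiy]
    rw [aeval_single_X_add_single_one_Apoly q hzy, aeval_single_X_add_single_one_Apoly d hzy]
      at hdvd
    exact not_chooseSqPoly_dvd_sq hdq hdvd

theorem two_mul_sum_eq_mul_of_X_dvd (hadd : r + s = edgeForm q n) {i j k : Fin m}
    (hr : MvPolynomial.X i ∣ r) (hs : MvPolynomial.X j ∣ s) (hki : k ≠ i) (hkj : k ≠ j) :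
    2 * ((q : ℤ) + 1) * ∑ i, n i = q * n k := by
  have heval := congrArg (MvPolynomial.aeval (Pi.single k 1 : Fin m → ℚ)) hadd
  rw [map_add, aeval_eq_zero_of_X_dvd (Pi.single_eq_of_ne hki.symm 1) hr,
    aeval_eq_zero_of_X_dvd (Pi.single_eq_of_ne hkj.symm 1) hs, aeval_single_one_edgeForm] at heval
  have : 2 * ((q : ℚ) + 1) * ∑ i, (n i : ℚ) = q * n k := by linear_combination -heval
  exact_mod_cast this

theorem exists_aeval_Apoly_eq_one (hm : 2 * (q + 1) ≤ m) {i j : Fin m}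
    (hn : ∀ k, k ≠ i → k ≠ j → n k = 0) :
    ∃ v : Fin m → ℚ, (∀ k, n k ≠ 0 → v k = 0) ∧ MvPolynomial.aeval v (Apoly m q) = 1 := by
  rcases q.eq_zero_or_pos with rfl | hq
  · exact ⟨0, fun _ _ => rfl, by rw [Apoly_zero, map_one]⟩
  · obtain ⟨z, hz⟩ : ∃ z, z ∉ ({i, j} : Finset (Fin m)) := by
      by_contra! hall
      have hcard := (Finset.card_le_card fun k (_ : k ∈ univ) => hall k).trans Finset.card_le_two
      rw [Finset.card_univ, Fintype.card_fin] at hcard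
      omega
    refine ⟨Pi.single z 1, fun k hk => Pi.single_eq_of_ne (fun h => hk ?_) 1,
      aeval_single_one_Apoly q z⟩
    rw [Finset.mem_insert, Finset.mem_singleton, not_or] at hz
    rw [h, hn z hz.1 hz.2]

theorem mul_eq_overlapRatio_sq_of_X_dvd (hm : 2 * (q + 1) ≤ m)
    (hdeg : ∑ i, (n i).natAbs + 2 * d = 2 * (q + 1)) (hadd : r + s = edgeForm (q + 1) n)
    (hmul : r * s = κ • ((∏ i, MvPolynomial.X i ^ (n i).natAbs) * overlapForm d n ^ 2))
    {i j : Fin m} (hij : i ≠ j) (hn : ∀ k, k ≠ i → k ≠ j → n k = 0) {a b : ℕ}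
    (hi : (n i).natAbs = a + 1) (hj : (n j).natAbs = b + 1) (hr : MvPolynomial.X i ∣ r)
    (hs : MvPolynomial.X j ∣ s) :
    ((q + 2) * (q + 1) ^ 2) ^ 2 *
        ((2 * ∑ k, (n k : ℚ) - n i / 2) * (2 * ∑ k, (n k : ℚ) - n j / 2)) =
      κ * 0 ^ (a + b) * (overlapRatio d n : ℚ) ^ 2 := by
  obtain ⟨v, hv, hvq⟩ := exists_aeval_Apoly_eq_one hm hn
  have hvi : v i = 0 := hv i (by omega)
  have hvj : v j = 0 := hv j (by omega)
  have hmul' : r * s = MvPolynomial.X i * MvPolynomial.X j *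
      (κ • (MvPolynomial.X i ^ a * MvPolynomial.X j ^ b * overlapForm d n ^ 2)) := by
    rw [hmul, Fintype.prod_eq_mul i j hij fun k hk => by
      rw [hn k hk.1 hk.2, Int.natAbs_zero, pow_zero], hi, hj, mul_smul_comm]
    exact congrArg (κ • ·) (by ring)
  have hprod := aeval_pderiv_mul_aeval_pderiv hij hr hs hmul' hvi hvj
  rw [hadd, aeval_pderiv_edgeForm_succ q hvi hv, aeval_pderiv_edgeForm_succ q hvj hv, map_smul,
    map_mul, map_mul, map_pow, map_pow, map_pow, aeval_overlapForm_of_support d hv,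
    MvPolynomial.aeval_X, MvPolynomial.aeval_X, hvi, hvj, hvq] at hprod
  have hvd : (0 : ℚ) ^ (a + b) * MvPolynomial.aeval v (Apoly m d) ^ 2 = 0 ^ (a + b) := by
    rcases eq_or_ne (a + b) 0 with hab | hab
    · have hd : d = q := by
        have := Fintype.sum_eq_add (f := fun k => (n k).natAbs) i j hij fun k hk => by
          rw [hn k hk.1 hk.2, Int.natAbs_zero]
        omega
      rw [hd, hvq, one_pow, mul_one]
    · rw [zero_pow hab, zero_mul]
  simp only [smul_eq_mul] at hprod
  linear_combination hprod + κ * (overlapRatio d n : ℚ) ^ 2 * hvd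

end Factorization

theorem sum_toNat_add_sum_toNat_neg {ι : Type*} (s : Finset ι) (n : ι → ℤ) :
    ∑ i ∈ s, (n i).toNat + ∑ i ∈ s, (-n i).toNat = ∑ i ∈ s, (n i).natAbs := by
  rw [← Finset.sum_add_distrib]
  exact Finset.sum_congr rfl fun i _ => by omega

theorem sum_toNat_sub_sum_toNat_neg {ι : Type*} (s : Finset ι) (n : ι → ℤ) :
    ((∑ i ∈ s, (n i).toNat : ℕ) : ℤ) - (∑ i ∈ s, (-n i).toNat : ℕ) = ∑ i ∈ s, n i := by
  push_cast
  rw [← Finset.sum_sub_distrib]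
  exact Finset.sum_congr rfl fun i _ => Int.toNat_sub_toNat_neg _

theorem multinomial_dvd_factorial_sum {ι : Type*} (s : Finset ι) (f : ι → ℕ) :
    Nat.multinomial s f ∣ (∑ i ∈ s, f i).factorial :=
  Dvd.intro_left _ (Nat.multinomial_spec s f)

theorem overlapRatio_zero_dvd_factorial_mul_factorial {m : ℕ} (n : Fin m → ℤ) :
    overlapRatio 0 n ∣ (∑ i, (n i).toNat).factorial * (∑ i, (-n i).toNat).factorial := by
  rw [overlapRatio, Nat.choose_zero_right, Nat.choose_zero_right, one_mul, one_mul]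
  exact mul_dvd_mul (multinomial_dvd_factorial_sum _ _) (multinomial_dvd_factorial_sum _ _)

theorem overlapRatio_of_sum_eq_one {m : ℕ} (d : ℕ) {n : Fin m → ℤ} (hpos : ∑ i, (n i).toNat = 1)
    (hneg : ∑ i, (-n i).toNat = 1) : overlapRatio d n = (d + 1) ^ 2 := by
  have hone {f : Fin m → ℕ} (hf : ∑ i, f i = 1) : Nat.multinomial univ f = 1 := by
    simpa [hf] using multinomial_dvd_factorial_sum univ f
  rw [overlapRatio, hone hpos, hone hneg, hpos, hneg, add_comm 1 d,
    Nat.choose_succ_self_right, mul_one, sq]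

section Split

variable {m q d : ℕ} {n : Fin m → ℤ} {r s : MvPolynomial (Fin m) ℚ} {i j : Fin m}

theorem eq_neg_of_X_dvd_of_sum_eq_zero (hq : q ≠ 0) (hsum : ∑ k, n k = 0)
    (hadd : r + s = edgeForm q n) (hi : n i ≠ 0) (hr : MvPolynomial.X i ∣ r)
    (hs : MvPolynomial.X j ∣ s) :
    i ≠ j ∧ n j = -n i ∧ ∀ k, k ≠ i → k ≠ j → n k = 0 := by
  have hsupp (k : Fin m) (hki : k ≠ i) (hkj : k ≠ j) : n k = 0 := by
    have := two_mul_sum_eq_mul_of_X_dvd hadd hr hs hki hkj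
    rw [hsum, mul_zero, zero_eq_mul] at this
    exact this.resolve_left (Int.natCast_ne_zero.2 hq)
  have hij : i ≠ j := by
    rintro rfl
    exact hi ((Fintype.sum_eq_single i fun k hk => hsupp k hk hk).symm.trans hsum)
  have hpair := Fintype.sum_eq_add i j hij fun k hk => hsupp k hk.1 hk.2
  exact ⟨hij, by omega, hsupp⟩

theorem not_X_dvd_of_sum_eq_zero (hq : q ≠ 0) (hm : 2 * q ≤ m) (hsum : ∑ k, n k = 0)
    (hdeg : ∑ k, (n k).natAbs + 2 * d = 2 * q) (hadd : r + s = edgeForm q n)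
    (hmul : r * s = (-((q : ℚ) + 1) ^ 2) •
      ((∏ k, MvPolynomial.X k ^ (n k).natAbs) * overlapForm d n ^ 2))
    (hi : n i ≠ 0) (hr : MvPolynomial.X i ∣ r) : ¬ MvPolynomial.X j ∣ s := by
  intro hs
  obtain ⟨p, rfl⟩ : ∃ p, q = p + 1 := Nat.exists_eq_succ_of_ne_zero hq
  obtain ⟨hij, hnj, hsupp⟩ := eq_neg_of_X_dvd_of_sum_eq_zero hq hsum hadd hi hr hs
  have habs : ∑ k, (n k).natAbs = (n i).natAbs + (n j).natAbs :=
    Fintype.sum_eq_add i j hij fun k hk => by rw [hsupp k hk.1 hk.2, Int.natAbs_zero]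
  obtain ⟨a, ha⟩ : ∃ a, (n i).natAbs = a + 1 := ⟨(n i).natAbs - 1, by omega⟩
  have hcoeff := mul_eq_overlapRatio_sq_of_X_dvd hm hdeg hadd hmul hij hsupp ha (b := a)
    (by omega) hr hs
  have hsumQ : ∑ k, (n k : ℚ) = 0 := by exact_mod_cast hsum
  rw [hnj, hsumQ] at hcoeff
  push_cast at hcoeff
  rcases a.eq_zero_or_pos with rfl | ha_pos
  · have hpos_add := sum_toNat_add_sum_toNat_neg univ n
    have hpos_sub := sum_toNat_sub_sum_toNat_neg univ n
    obtain rfl : d = p := by omega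
    have hni : (n i : ℚ) ^ 2 = 1 := by
      rw [← Int.cast_pow, ← Int.natAbs_sq, ha]
      norm_num
    rw [overlapRatio_of_sum_eq_one d (by omega) (by omega)] at hcoeff
    push_cast at hcoeff
    have : ((d : ℚ) + 2) ^ 2 * (d + 1) ^ 4 = 0 := by
      linear_combination 4 / 3 * hcoeff + ((d + 2) * (d + 1) ^ 2) ^ 2 * hni / 3
    exact absurd this (by positivity)
  · have hzero : (0 : ℚ) ^ (a + a) = 0 := zero_pow (by omega)
    rw [hzero] at hcoeff
    have hni : (n i : ℚ) ≠ 0 := Int.cast_ne_zero.2 hi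
    have : ((p + 2) * (p + 1) ^ 2 * (n i : ℚ)) ^ 2 = 0 := by linear_combination -4 * hcoeff
    exact pow_ne_zero 2 (mul_ne_zero (by positivity) hni) this

theorem eq_pair_of_X_dvd_of_sum_eq_two (hq : q ≠ 0) (hm : 2 * q ≤ m) (hsum : ∑ k, n k = 2)
    (hnorm : ∑ k, (n k).natAbs ≤ 2 * q) (hadd : r + s = edgeForm q n)
    (hi : n i ≠ 0) (hj : n j ≠ 0) (hr : MvPolynomial.X i ∣ r) (hs : MvPolynomial.X j ∣ s) :
    q = 1 ∧ i ≠ j ∧ n i = 1 ∧ n j = 1 ∧ ∀ k, k = i ∨ k = j := by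
  have hlarge (k : Fin m) : 5 ≤ (n k).natAbs + if k ∈ ({i, j} : Finset (Fin m)) then 4 else 0 := by
    split_ifs with hk
    · rw [Finset.mem_insert, Finset.mem_singleton] at hk
      rcases hk with rfl | rfl <;> omega
    · rw [Finset.mem_insert, Finset.mem_singleton, not_or] at hk
      have heq := two_mul_sum_eq_mul_of_X_dvd hadd hr hs hk.1 hk.2
      rw [hsum] at heq
      have : 4 < n k := by
        by_contra! hle
        have : (q : ℤ) * n k ≤ q * 4 := by gcongr
        linarith
      omega
  have hcount := Finset.sum_le_sum fun k (_ : k ∈ univ) => hlarge k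
  rw [Finset.sum_add_distrib, Finset.sum_ite_mem, Finset.univ_inter] at hcount
  simp only [Finset.sum_const, Finset.card_univ, Fintype.card_fin, smul_eq_mul] at hcount
  have hcard := Finset.card_le_two (a := i) (b := j)
  have hij : i ≠ j := by
    rintro rfl
    rw [Finset.pair_eq_singleton, Finset.card_singleton] at hcount
    omega
  have huniv : ({i, j} : Finset (Fin m)) = univ :=
    Finset.eq_univ_of_card _ (by rw [Fintype.card_fin]; omega)
  have hpair (k : Fin m) : k = i ∨ k = j := by
    simpa only [← huniv, Finset.mem_insert, Finset.mem_singleton] using mem_univ k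
  have habs := hnorm
  rw [← huniv, Finset.sum_pair hij] at hsum habs
  exact ⟨by omega, hij, by omega, by omega, hpair⟩

theorem not_X_dvd_of_sum_eq_two (hq : q ≠ 0) (hm : 2 * q ≤ m) (hsum : ∑ k, n k = 2)
    (hdeg : ∑ k, (n k).natAbs + 2 * d = 2 * q) (hadd : r + s = edgeForm q n)
    (hmul : r * s = ((q : ℚ) ^ 2) •
      ((∏ k, MvPolynomial.X k ^ (n k).natAbs) * overlapForm d n ^ 2))
    (hi : n i ≠ 0) (hj : n j ≠ 0) (hr : MvPolynomial.X i ∣ r) : ¬ MvPolynomial.X j ∣ s := by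
  intro hs
  obtain ⟨rfl, hij, hni, hnj, hpair⟩ :=
    eq_pair_of_X_dvd_of_sum_eq_two hq hm hsum (by omega) hadd hi hj hr hs
  have hsupp (k : Fin m) (hki : k ≠ i) (hkj : k ≠ j) : n k = 0 :=
    ((hpair k).elim hki hkj).elim
  have habs : ∑ k, (n k).natAbs = 2 := by
    rw [Fintype.sum_eq_add i j hij fun k hk => by rw [hsupp k hk.1 hk.2, Int.natAbs_zero], hni, hnj]
    rfl
  obtain rfl : d = 0 := by omega
  have hcoeff := mul_eq_overlapRatio_sq_of_X_dvd (q := 0) hm hdeg hadd hmul hij hsupp (a := 0)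
    (b := 0) (by omega) (by omega) hr hs
  have hpos_add := sum_toNat_add_sum_toNat_neg univ n
  have hpos_sub := sum_toNat_sub_sum_toNat_neg univ n
  have hle : overlapRatio 0 n ≤ 2 := by
    have hdvd := overlapRatio_zero_dvd_factorial_mul_factorial n
    rw [show ∑ k, (n k).toNat = 2 by omega, show ∑ k, (-n k).toNat = 0 by omega] at hdvd
    exact Nat.le_of_dvd two_pos hdvd
  have hsumQ : ∑ k, (n k : ℚ) = 2 := by exact_mod_cast hsum
  rw [hsumQ, hni, hnj] at hcoeff
  have hsq : (overlapRatio 0 n : ℚ) ^ 2 = 49 := by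
    simp only [Nat.cast_zero, zero_add, Int.cast_one, add_zero, pow_zero] at hcoeff
    linear_combination -hcoeff
  have : overlapRatio 0 n ^ 2 = 49 := by exact_mod_cast hsq
  nlinarith

end Split

theorem mul_ne_smul_of_add_eq_edgeForm {m q d : ℕ} (hm : 2 * q ≤ m) {n : Fin m → ℤ} (hn : n ≠ 0)
    (hdeg : ∑ i, (n i).natAbs + 2 * d = 2 * q) {κ : ℚ}
    (hκ : ∑ i, n i = 0 ∧ κ = -((q : ℚ) + 1) ^ 2 ∨ ∑ i, n i = 2 ∧ κ = (q : ℚ) ^ 2)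
    {r s : MvPolynomial (Fin m) ℚ} (hadd : r + s = edgeForm q n) :
    r * s ≠ κ • ((∏ i, MvPolynomial.X i ^ (n i).natAbs) * overlapForm d n ^ 2) := by
  intro hmul
  have hn_pos := sum_natAbs_pos hn
  have hq : q ≠ 0 := by omega
  have hκ0 : κ ≠ 0 := by
    rcases hκ with ⟨-, rfl⟩ | ⟨-, rfl⟩
    · exact neg_ne_zero.2 (pow_ne_zero 2 (Nat.cast_add_one_ne_zero q))
    · exact pow_ne_zero 2 (Nat.cast_ne_zero.2 hq)
  rcases exists_prime_dvd_dvd_or_prod_pow_dvd_or (s := univ) (e := fun i => (n i).natAbs)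
      (fun i _ => MvPolynomial.X_prime (R := ℚ) (i := i)) (hmul.trans (mul_smul_comm _ _ _).symm)
    with ⟨i, -, j, -, hi, hj, hr, hs⟩ | hr | hs
  · rw [Int.natAbs_ne_zero] at hi hj
    rcases hκ with ⟨hsum, rfl⟩ | ⟨hsum, rfl⟩
    · exact not_X_dvd_of_sum_eq_zero hq hm hsum hdeg hadd hmul hi hr hs
    · exact not_X_dvd_of_sum_eq_two hq hm hsum hdeg hadd hmul hi hj hr hs
  · exact not_prod_X_pow_dvd hm hn hdeg hκ0 hadd hmul hr
  · exact not_prod_X_pow_dvd hm hn hdeg hκ0 ((add_comm s r).trans hadd)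
      ((mul_comm s r).trans hmul) hs

theorem add_eq_and_mul_eq_of_eq_X_add_C_mul {R : Type*} [CommRing R] {b c r s : R}
    (h : Polynomial.X ^ 2 - Polynomial.C b * Polynomial.X - Polynomial.C c =
      (Polynomial.X + Polynomial.C r) * (Polynomial.X + Polynomial.C s)) :
    r + s = -b ∧ r * s = -c := by
  have hmul := congrArg (Polynomial.eval 0) h
  have hone := congrArg (Polynomial.eval 1) h
  simp only [Polynomial.eval_sub, Polynomial.eval_add, Polynomial.eval_mul, Polynomial.eval_pow,
    Polynomial.eval_X, Polynomial.eval_C] at hmul hone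
  exact ⟨by linear_combination hmul - hone, by linear_combination -hmul⟩

section OneEdge

variable {m : ℕ}

/-- The linear coefficient `ℓ̄(ξ)` attached to the edge `ℓ = ∑ nᵢeᵢ`, which is red unless its mass
`∑ nᵢ` vanishes. -/
noncomputable def oneEdgeTrace (q : ℕ) (n : Fin m → ℤ) : MvPolynomial (Fin m) ℚ :=
  let lpoly : MvPolynomial (Fin m) ℚ :=
    ((q : ℚ) + 1)⁻¹ • ∑ i, n i • MvPolynomial.pderiv i (Apoly m (q + 1))
  if ∑ i, n i = 0 then lpoly
  else -lpoly + (2 * ((q : ℚ) + 1)) • Apoly m q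

/-- The sign `σ_ℓ` of the edge `ℓ = ∑ nᵢeᵢ`. -/
def oneEdgeSign (n : Fin m → ℤ) : ℚ :=
  if ∑ i, n i = 0 then 1 else -1

/-- The square `c(ℓ)²`, which is a polynomial although `c(ℓ)` involves square roots of the `ξᵢ`. -/
noncomputable def oneEdgeWeightSq (q : ℕ) (n : Fin m → ℤ) : MvPolynomial (Fin m) ℚ :=
  let lp : Fin m → ℕ := fun i => (n i).toNat
  let lm : Fin m → ℕ := fun i => (-(n i)).toNat
  if ∑ i, n i = 0 then
    (∏ i, MvPolynomial.X i ^ (lp i + lm i)) *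
      (((q : ℚ) + 1) •
        ∑ α ∈ (Fintype.piFinset fun _ : Fin m => Finset.range (q + 1)).filter
            (fun α => ∑ i, (α i + lp i) = q),
          MvPolynomial.C
              ((Nat.multinomial Finset.univ (fun i => lp i + α i) : ℚ) *
                (Nat.multinomial Finset.univ (fun i => lm i + α i) : ℚ)) *
            ∏ i, MvPolynomial.X i ^ α i) ^ 2
  else
    (∏ i, MvPolynomial.X i ^ (lp i + lm i)) *
      ((q : ℚ) •
        ∑ α ∈ (Fintype.piFinset fun _ : Fin m => Finset.range (q + 1)).filter
            (fun α => ∑ i, (α i + lp i) = q - 1),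
          MvPolynomial.C
              ((Nat.multinomial Finset.univ (fun i => lm i + α i) : ℚ) *
                (Nat.multinomial Finset.univ (fun i => lp i + α i) : ℚ)) *
            ∏ i, MvPolynomial.X i ^ α i) ^ 2

/-- The characteristic polynomial of the graph whose only edge is `ℓ = ∑ nᵢeᵢ`. -/
noncomputable def oneEdgeCharpoly (q : ℕ) (n : Fin m → ℤ) : (MvPolynomial (Fin m) ℚ)[X] :=
  Polynomial.X ^ 2 - Polynomial.C (oneEdgeTrace q n) * Polynomial.X -
    Polynomial.C (oneEdgeSign n • oneEdgeWeightSq q n)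

variable {q d : ℕ} {n : Fin m → ℤ}

theorem oneEdgeTrace_of_sum_eq_zero (hsum : ∑ i, n i = 0) : oneEdgeTrace q n = edgeForm q n := by
  have hsumQ : ∑ i, (n i : ℚ) = 0 := by exact_mod_cast hsum
  rw [oneEdgeTrace, if_pos hsum, edgeForm, hsumQ, mul_zero, zero_smul, add_zero]

theorem oneEdgeTrace_of_sum_eq_neg_two (hsum : ∑ i, n i = -2) :
    oneEdgeTrace q n = edgeForm q (-n) := by
  have hsumQ : ∑ i, ((-n) i : ℚ) = 2 := by
    have : ∑ i, (-n) i = 2 := by simp [hsum]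
    exact_mod_cast this
  rw [oneEdgeTrace, if_neg (by omega), edgeForm, hsumQ, mul_comm (_ + _)]
  simp only [Pi.neg_apply, neg_smul, Finset.sum_neg_distrib, smul_neg]

theorem oneEdgeSign_smul_oneEdgeWeightSq_of_sum_eq_zero (hsum : ∑ i, n i = 0)
    (hd : ∑ i, (n i).toNat + d = q) :
    oneEdgeSign n • oneEdgeWeightSq q n =
      ((q : ℚ) + 1) ^ 2 • ((∏ i, MvPolynomial.X i ^ (n i).natAbs) * overlapForm d n ^ 2) := by
  rw [oneEdgeSign, if_pos hsum, one_smul, oneEdgeWeightSq, if_pos hsum,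
    filter_piFinset_range_eq_piAntidiag (by omega) _ hd, ← overlapForm, _root_.smul_pow,
    mul_smul_comm]
  simp only [Int.toNat_add_toNat_neg_eq_natAbs]

theorem oneEdgeSign_smul_oneEdgeWeightSq_of_sum_eq_neg_two (hsum : ∑ i, n i = -2)
    (hd : ∑ i, (n i).toNat + d = q - 1) :
    oneEdgeSign n • oneEdgeWeightSq q n =
      -((q : ℚ) ^ 2 •
        ((∏ i, MvPolynomial.X i ^ ((-n) i).natAbs) * overlapForm d (-n) ^ 2)) := by
  have hsum0 : ∑ i, n i ≠ 0 := by omega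
  rw [oneEdgeSign, if_neg hsum0, neg_one_smul, oneEdgeWeightSq, if_neg hsum0,
    filter_piFinset_range_eq_piAntidiag (by omega) _ hd, overlapForm, _root_.smul_pow,
    mul_smul_comm]
  simp only [Int.toNat_add_toNat_neg_eq_natAbs, Pi.neg_apply, neg_neg, Int.natAbs_neg]

theorem one_edge_charpoly_irreducible_general (hm : 2 * q ≤ m)
    (hnorm : ∑ i, (n i).natAbs ≤ 2 * q) (hmass : ∑ i, n i = 0 ∨ ∑ i, n i = -2) (hne : n ≠ 0) :
    ¬ ∃ r s : MvPolynomial (Fin m) ℚ, oneEdgeCharpoly q n =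
      (Polynomial.X + Polynomial.C r) * (Polynomial.X + Polynomial.C s) := by
  rintro ⟨r, s, hrs⟩
  obtain ⟨hadd, hmul⟩ := add_eq_and_mul_eq_of_eq_X_add_C_mul hrs
  have hadd' : -r + -s = oneEdgeTrace q n := by linear_combination -hadd
  have hmul' : -r * -s = -(oneEdgeSign n • oneEdgeWeightSq q n) := by rw [neg_mul_neg, hmul]
  have habs := sum_toNat_add_sum_toNat_neg univ n
  have hmass' := sum_toNat_sub_sum_toNat_neg univ n
  rcases hmass with hsum | hsum
  · obtain ⟨d, hd⟩ : ∃ d, ∑ i, (n i).toNat + d = q := ⟨q - ∑ i, (n i).toNat, by omega⟩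
    rw [oneEdgeTrace_of_sum_eq_zero hsum] at hadd'
    rw [oneEdgeSign_smul_oneEdgeWeightSq_of_sum_eq_zero hsum hd, ← neg_smul] at hmul'
    exact mul_ne_smul_of_add_eq_edgeForm hm hne (by omega) (.inl ⟨hsum, rfl⟩) hadd' hmul'
  · obtain ⟨d, hd⟩ : ∃ d, ∑ i, (n i).toNat + d = q - 1 := ⟨q - 1 - ∑ i, (n i).toNat, by omega⟩
    rw [oneEdgeTrace_of_sum_eq_neg_two hsum] at hadd'
    rw [oneEdgeSign_smul_oneEdgeWeightSq_of_sum_eq_neg_two hsum hd, neg_neg] at hmul'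
    have hdeg : ∑ i, ((-n) i).natAbs + 2 * d = 2 * q := by
      simp only [Pi.neg_apply, Int.natAbs_neg]
      omega
    have hsum' : ∑ i, (-n) i = 2 := by simp [hsum]
    exact mul_ne_smul_of_add_eq_edgeForm hm (neg_ne_zero.2 hne) hdeg (.inr ⟨hsum', rfl⟩) hadd' hmul'

end OneEdge

/-- for any q ≥ 1 and any edge ℓ = Σᵢ nᵢeᵢ
(|ℓ|₁ ≤ 2q, mass η(ℓ) ∈ {0,−2}, ℓ ≠ 0, ℓ ≠ −2eᵢ, support of size ≥ 2, m ≥ 2q),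
the characteristic polynomial χ(t) = t² − ℓ̄(ξ) t − σ_ℓ c(ℓ)² of the one-edge
colored marked graph with vertices 0, ℓ is irreducible over ℚ(ξ): being monic
and quadratic, it does not factor into linear factors with polynomial
coefficients.  Here ℓ(ξ) = (1/(q+1)) Σᵢ nᵢ ∂A_{q+1}/∂ξᵢ; ℓ̄ = ℓ(ξ) and σ = 1
for a black edge, ℓ̄ = −ℓ(ξ) + 2(q+1)A_q and σ = −1 for a red edge; and
c(ℓ)² = ξ^{ℓ⁺+ℓ⁻}·(prefactor·Σ_α ...)² as in formula (06''). -/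
theorem one_edge_charpoly_irreducible (q m : ℕ) (hq : 1 ≤ q) (hm : 2 * q ≤ m)
    (n : Fin m → ℤ) (hnorm : ∑ i, (n i).natAbs ≤ 2 * q)
    (hmass : ∑ i, n i = 0 ∨ ∑ i, n i = -2)
    (hne : n ≠ 0)
    (hn2 : ∀ i : Fin m, n ≠ fun j => if j = i then -2 else 0)
    (hsupp : 2 ≤ (Finset.univ.filter fun i => n i ≠ 0).card) :
    let lp : Fin m → ℕ := fun i => (n i).toNat
    let lm : Fin m → ℕ := fun i => (-(n i)).toNat
    let lpoly : MvPolynomial (Fin m) ℚ :=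
      ((q : ℚ) + 1)⁻¹ • ∑ i, n i • MvPolynomial.pderiv i (Apoly m (q + 1))
    let lbar : MvPolynomial (Fin m) ℚ :=
      if ∑ i, n i = 0 then lpoly
      else -lpoly + (2 * ((q : ℚ) + 1)) • Apoly m q
    let σ : ℚ := if ∑ i, n i = 0 then 1 else -1
    let csq : MvPolynomial (Fin m) ℚ :=
      if ∑ i, n i = 0 then
        (∏ i, MvPolynomial.X i ^ (lp i + lm i)) *
          (((q : ℚ) + 1) •
            ∑ α ∈ (Fintype.piFinset fun _ : Fin m => Finset.range (q + 1)).filter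
                (fun α => ∑ i, (α i + lp i) = q),
              MvPolynomial.C
                  ((Nat.multinomial Finset.univ (fun i => lp i + α i) : ℚ) *
                    (Nat.multinomial Finset.univ (fun i => lm i + α i) : ℚ)) *
                ∏ i, MvPolynomial.X i ^ α i) ^ 2
      else
        (∏ i, MvPolynomial.X i ^ (lp i + lm i)) *
          ((q : ℚ) •
            ∑ α ∈ (Fintype.piFinset fun _ : Fin m => Finset.range (q + 1)).filter
                (fun α => ∑ i, (α i + lp i) = q - 1),
              MvPolynomial.C
                  ((Nat.multinomial Finset.univ (fun i => lm i + α i) : ℚ) *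
                    (Nat.multinomial Finset.univ (fun i => lp i + α i) : ℚ)) *
                ∏ i, MvPolynomial.X i ^ α i) ^ 2
    ¬ ∃ r s : MvPolynomial (Fin m) ℚ,
        Polynomial.X ^ 2 - Polynomial.C lbar * Polynomial.X -
            Polynomial.C (σ • csq) =
          (Polynomial.X + Polynomial.C r) * (Polynomial.X + Polynomial.C s) := by
  exact one_edge_charpoly_irreducible_general hm hnorm hmass hne
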